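/- Every integral lattice L with Λ3 ⊆ L ⊆ V is isometric (via a linear isometry of ℝ^4) to one of the four lattices: Λ3; Λ3 + ℤ·(ε1−ε2)/√2; Λ3 + ℤ·(ε1−ε2+ε3−ε4)/√2; and Λ3 + ℤ·(ε1−ε2)/√2 + ℤ·(ε3−ε4)/√2. -/

import Mathlib

/-!
An element of `L` pairs integrally with `√2 • A₃` and has integral norm; a parity argument then
shows that it has the form `y/√2` with `y` an integer vector of coordinate sum zero.  Hence `L` is
determined by its reduction `C` modulo 2, a binary code of length 4, and integrality of `L` makes
`C` self-orthogonal.  Permuting coordinates is an isometry, and up to permutation the only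
self-orthogonal codes of length 4 are `0`, `⟨1100⟩`, `⟨1111⟩` and `⟨1100, 0011⟩`.
-/

noncomputable section

open scoped RealInnerProductSpace

/-- `ℝ^n` with the standard inner product. -/
abbrev E (n : ℕ) := EuclideanSpace ℝ (Fin n)

/-- The standard basis vector `ε i`. -/
def εv {n : ℕ} (i : Fin n) : E n := EuclideanSpace.single i 1

/-- The vector of `ℝ^n` with the given coordinates. -/
def vec {n : ℕ} (x : Fin n → ℝ) : E n := (WithLp.equiv 2 (Fin n → ℝ)).symm x

/-- The vector of `ℝ^n` with the given integer coordinates. -/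
def intVec {n : ℕ} (x : Fin n → ℤ) : E n := (WithLp.equiv 2 (Fin n → ℝ)).symm fun i => (x i : ℝ)

/-- A lattice is integral if all pairwise inner products of its elements are integers. -/
def LatticeIsIntegral {n : ℕ} (L : Submodule ℤ (E n)) : Prop :=
  ∀ x ∈ L, ∀ y ∈ L, ∃ k : ℤ, ⟪x, y⟫ = (k : ℝ)

/-- Two lattices are isometric if a linear isometry of the ambient space carries
one onto the other. -/
def IsometricLattices {n : ℕ} (L M : Submodule ℤ (E n)) : Prop :=
  ∃ g : E n ≃ₗᵢ[ℝ] E n, g '' (L : Set (E n)) = (M : Set (E n))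

/-- The laminated lattice `Λ₃ = {√2·x : x ∈ ℤ⁴, x 0 + x 1 + x 2 + x 3 = 0} ≅ √2·A₃`. -/
def Λ3 : Submodule ℤ (E 4) :=
  Submodule.span ℤ
    {v : E 4 | ∃ x : Fin 4 → ℤ, x 0 + x 1 + x 2 + x 3 = 0 ∧ v = Real.sqrt 2 • intVec x}

/-- `(ε1 - ε2)/√2`. -/
def u12 : E 4 := (Real.sqrt 2)⁻¹ • (εv 0 - εv 1)
/-- `(ε3 - ε4)/√2`. -/
def u34 : E 4 := (Real.sqrt 2)⁻¹ • (εv 2 - εv 3)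
/-- `(ε1 - ε2 + ε3 - ε4)/√2`. -/
def w : E 4 := (Real.sqrt 2)⁻¹ • (εv 0 - εv 1 + εv 2 - εv 3)

section CodeLattice

variable {n : ℕ}

/-- The root lattice `A_{n-1}`: the integer vectors of coordinate sum zero. -/
def rootLattice (n : ℕ) : Submodule ℤ (Fin n → ℤ) :=
  LinearMap.ker (∑ i, LinearMap.proj i)

/-- Reduction of integer vectors modulo 2, through which a lattice determines a binary code. -/
def modTwo (n : ℕ) : (Fin n → ℤ) →ₗ[ℤ] (Fin n → ZMod 2) :=
  (Int.castAddHom (ZMod 2)).toIntLinearMap.compLeft (Fin n)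

/-- The embedding `y ↦ y/√2` of `ℤ^n` into `ℝ^n`. -/
def divSqrtTwo (n : ℕ) : (Fin n → ℤ) →ₗ[ℤ] E n where
  toFun y := (√2)⁻¹ • intVec y
  map_add' y z := by ext i; simp [intVec, mul_add]
  map_smul' k y := by ext i; simp [intVec, mul_left_comm]

/-- Construction A inside the hyperplane of coordinate sum zero: the vectors `y/√2` with
`y ∈ A_{n-1}` and `y mod 2 ∈ C`. A binary linear code is encoded as a `ℤ`-submodule of `𝔽₂ⁿ`, which
is the same as an `𝔽₂`-subspace. -/
def codeLattice (C : Submodule ℤ (Fin n → ZMod 2)) : Submodule ℤ (E n) :=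
  (rootLattice n ⊓ C.comap (modTwo n)).map (divSqrtTwo n)

/-- A binary code is self-orthogonal if its words are pairwise orthogonal, each word also being
orthogonal to itself. -/
def IsSelfOrthogonal (C : Submodule ℤ (Fin n → ZMod 2)) : Prop :=
  ∀ c ∈ C, ∀ d ∈ C, c ⬝ᵥ d = 0

lemma mem_rootLattice {y : Fin n → ℤ} : y ∈ rootLattice n ↔ ∑ i, y i = 0 := by
  simp [rootLattice]

lemma modTwo_apply (y : Fin n → ℤ) (i : Fin n) : modTwo n y i = y i := rfl

lemma modTwo_eq_zero_iff {y : Fin n → ℤ} : modTwo n y = 0 ↔ ∀ i, 2 ∣ y i := by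
  simp only [funext_iff, modTwo_apply, Pi.zero_apply, ZMod.intCast_zmod_eq_zero_iff_dvd,
    Nat.cast_ofNat]

lemma modTwo_dotProduct_modTwo (y z : Fin n → ℤ) :
    modTwo n y ⬝ᵥ modTwo n z = ((y ⬝ᵥ z : ℤ) : ZMod 2) := by
  simp [dotProduct, modTwo_apply]

lemma divSqrtTwo_apply (y : Fin n → ℤ) (i : Fin n) : divSqrtTwo n y i = (√2)⁻¹ * y i := by
  simp [divSqrtTwo, intVec]

lemma divSqrtTwo_injective : Function.Injective (divSqrtTwo n) := by
  intro y z h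
  ext i
  simpa [divSqrtTwo_apply] using congr($h i)

lemma divSqrtTwo_two_smul (y : Fin n → ℤ) : divSqrtTwo n ((2 : ℤ) • y) = √2 • intVec y := by
  ext i
  have h : (√2)⁻¹ * 2 = √2 := by rw [inv_mul_eq_div, Real.div_sqrt]
  simp [divSqrtTwo_apply, intVec, ← mul_assoc, h]

lemma inner_divSqrtTwo (y z : Fin n → ℤ) :
    ⟪divSqrtTwo n y, divSqrtTwo n z⟫ = ((y ⬝ᵥ z : ℤ) : ℝ) / 2 := by
  have h : (√2)⁻¹ * (√2)⁻¹ = (1 / 2 : ℝ) := by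
    rw [← mul_inv, Real.mul_self_sqrt zero_le_two, one_div]
  simp only [PiLp.inner_apply, divSqrtTwo_apply, RCLike.inner_apply, conj_trivial, dotProduct,
    Int.cast_sum, Int.cast_mul, Finset.sum_div]
  refine Finset.sum_congr rfl fun i _ => ?_
  linear_combination (y i * z i : ℝ) * h

lemma mem_codeLattice {C : Submodule ℤ (Fin n → ZMod 2)} {x : E n} :
    x ∈ codeLattice C ↔ ∃ y ∈ rootLattice n, modTwo n y ∈ C ∧ divSqrtTwo n y = x := by
  simp [codeLattice, and_assoc]

lemma codeLattice_map_modTwo {N : Submodule ℤ (Fin n → ℤ)} (hN : N ≤ rootLattice n) :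
    codeLattice (N.map (modTwo n)) = codeLattice ⊥ ⊔ N.map (divSqrtTwo n) := by
  rw [codeLattice, codeLattice, Submodule.comap_map_eq, Submodule.comap_bot, sup_comm N,
    ← inf_sup_assoc_of_le _ hN, Submodule.map_sup]

lemma codeLattice_span_modTwo {S : Set (Fin n → ℤ)} (hS : S ⊆ rootLattice n) :
    codeLattice (Submodule.span ℤ (modTwo n '' S)) =
      codeLattice ⊥ ⊔ Submodule.span ℤ (divSqrtTwo n '' S) := by
  rw [← Submodule.map_span, ← Submodule.map_span,
    codeLattice_map_modTwo (Submodule.span_le.2 hS)]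

lemma codeLattice_map_modTwo_comap_divSqrtTwo {L : Submodule ℤ (E n)} (hbot : codeLattice ⊥ ≤ L)
    (htop : L ≤ codeLattice ⊤) :
    codeLattice ((L.comap (divSqrtTwo n)).map (modTwo n)) = L := by
  rw [codeLattice, Submodule.comap_top, inf_top_eq] at htop
  have hroot : L.comap (divSqrtTwo n) ≤ rootLattice n := by
    rw [← Submodule.comap_map_eq_of_injective divSqrtTwo_injective (rootLattice n)]
    exact Submodule.comap_mono htop
  rw [codeLattice_map_modTwo hroot,
    Submodule.map_comap_eq_of_le (htop.trans LinearMap.map_le_range), sup_eq_right.2 hbot]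

lemma LatticeIsIntegral.isSelfOrthogonal {L : Submodule ℤ (E n)} (hL : LatticeIsIntegral L) :
    IsSelfOrthogonal ((L.comap (divSqrtTwo n)).map (modTwo n)) := by
  rintro _ ⟨y, hy, rfl⟩ _ ⟨z, hz, rfl⟩
  obtain ⟨k, hk⟩ := hL _ hy _ hz
  rw [inner_divSqrtTwo, div_eq_iff two_ne_zero] at hk
  rw [modTwo_dotProduct_modTwo, ZMod.intCast_zmod_eq_zero_iff_dvd]
  exact ⟨k, by rw [mul_comm]; exact_mod_cast hk⟩

lemma IsSelfOrthogonal.comap_funLeft {C : Submodule ℤ (Fin n → ZMod 2)} (hC : IsSelfOrthogonal C)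
    (σ : Equiv.Perm (Fin n)) :
    IsSelfOrthogonal (C.comap (LinearMap.funLeft ℤ (ZMod 2) σ)) := by
  intro c hc d hd
  rw [← comp_equiv_dotProduct_comp_equiv c d σ]
  exact hC _ hc _ hd

lemma isometricLattices_codeLattice_comap_funLeft (C : Submodule ℤ (Fin n → ZMod 2))
    (σ : Equiv.Perm (Fin n)) :
    IsometricLattices (codeLattice C)
      (codeLattice (C.comap (LinearMap.funLeft ℤ (ZMod 2) σ))) := by
  let g : E n ≃ₗᵢ[ℝ] E n := LinearIsometryEquiv.piLpCongrLeft 2 ℝ ℝ σ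
  have hg (y : Fin n → ℤ) : g (divSqrtTwo n y) = divSqrtTwo n (y ∘ σ.symm) := by
    ext i
    simp [g, divSqrtTwo_apply, LinearIsometryEquiv.piLpCongrLeft_apply, Equiv.piCongrLeft']
  have hroot (τ : Equiv.Perm (Fin n)) {y : Fin n → ℤ} (hy : y ∈ rootLattice n) :
      y ∘ τ ∈ rootLattice n := by
    rw [mem_rootLattice] at hy ⊢
    exact (Equiv.sum_comp τ y).trans hy
  refine ⟨g, Set.Subset.antisymm ?_ fun x hx => ?_⟩
  · rintro _ ⟨x, hx, rfl⟩
    obtain ⟨y, hy, hyC, rfl⟩ := mem_codeLattice.1 hx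
    refine mem_codeLattice.2 ⟨y ∘ σ.symm, hroot _ hy, ?_, (hg y).symm⟩
    have hcomp : LinearMap.funLeft ℤ (ZMod 2) σ (modTwo n (y ∘ σ.symm)) = modTwo n y := by
      ext i
      simp [LinearMap.funLeft_apply, modTwo_apply]
    rwa [Submodule.mem_comap, hcomp]
  · obtain ⟨y, hy, hyC, rfl⟩ := mem_codeLattice.1 hx
    refine ⟨_, mem_codeLattice.2 ⟨y ∘ σ, hroot _ hy, hyC, rfl⟩, ?_⟩
    rw [hg, Function.comp_assoc, Equiv.self_comp_symm, Function.comp_id]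

end CodeLattice

section Classification

lemma eq_or_eq_sup_span_singleton {R M : Type*} [Ring R] [AddCommGroup M] [Module R M]
    {W C : Submodule R M} {v : M} (hW : W ≤ C) (hC : ∀ c ∈ C, c ∈ W ∨ c - v ∈ W) :
    C = W ∨ C = W ⊔ Submodule.span R {v} := by
  by_cases hv : v ∈ C
  · refine .inr (le_antisymm (fun c hc => ?_)
      (sup_le hW ((Submodule.span_singleton_le_iff_mem v C).2 hv)))
    rcases hC c hc with h | h
    · exact Submodule.mem_sup_left h
    · rw [← sub_add_cancel c v]
      exact Submodule.add_mem_sup h (Submodule.mem_span_singleton_self v)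
  · refine .inl (le_antisymm (fun c hc => (hC c hc).resolve_right fun h => hv ?_) hW)
    simpa using C.sub_mem hc (hW h)

lemma exists_perm_comp_eq_of_dotProduct_self_eq_zero :
    ∀ c : Fin 4 → ZMod 2, c ⬝ᵥ c = 0 → (¬ ∀ i, c i = c 0) →
      ∃ σ : Equiv.Perm (Fin 4), ![1, 1, 0, 0] ∘ σ = c := by
  decide

variable {C : Submodule ℤ (Fin 4 → ZMod 2)}

lemma eq_bot_or_eq_span_of_forall_const (hC : ∀ c ∈ C, ∀ i, c i = c 0) :
    C = ⊥ ∨ C = Submodule.span ℤ {![1, 1, 1, 1]} := by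
  have hconst : ∀ c : Fin 4 → ZMod 2, (∀ i, c i = c 0) → c = 0 ∨ c - ![1, 1, 1, 1] = 0 := by
    decide
  simpa using eq_or_eq_sup_span_singleton bot_le fun c hc => hconst c (hC c hc)

lemma IsSelfOrthogonal.eq_span_of_mem (hC : IsSelfOrthogonal C) (hmem : ![1, 1, 0, 0] ∈ C) :
    C = Submodule.span ℤ {![1, 1, 0, 0]} ∨
      C = Submodule.span ℤ {![1, 1, 0, 0], ![0, 0, 1, 1]} := by
  have hperp : ∀ c : Fin 4 → ZMod 2, c ⬝ᵥ c = 0 → c ⬝ᵥ ![1, 1, 0, 0] = 0 →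
      (c = 0 ∨ c = ![1, 1, 0, 0]) ∨
        (c - ![0, 0, 1, 1] = 0 ∨ c - ![0, 0, 1, 1] = ![1, 1, 0, 0]) := by
    decide
  have hspan {c : Fin 4 → ZMod 2} (h : c = 0 ∨ c = ![1, 1, 0, 0]) :
      c ∈ Submodule.span ℤ {![1, 1, 0, 0]} := by
    rcases h with rfl | rfl
    · exact zero_mem _
    · exact Submodule.mem_span_singleton_self _
  rw [Submodule.span_insert]
  exact eq_or_eq_sup_span_singleton ((Submodule.span_singleton_le_iff_mem _ C).2 hmem)
    fun c hc => (hperp c (hC c hc c hc) (hC c hc _ hmem)).imp hspan hspan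

lemma IsSelfOrthogonal.exists_perm_comap_mem (hC : IsSelfOrthogonal C) :
    ∃ σ : Equiv.Perm (Fin 4), C.comap (LinearMap.funLeft ℤ (ZMod 2) σ) ∈
      ({⊥, Submodule.span ℤ {![1, 1, 0, 0]}, Submodule.span ℤ {![1, 1, 1, 1]},
        Submodule.span ℤ {![1, 1, 0, 0], ![0, 0, 1, 1]}} :
        Set (Submodule ℤ (Fin 4 → ZMod 2))) := by
  by_cases hconst : ∀ c ∈ C, ∀ i, c i = c 0
  · have hid : C.comap (LinearMap.funLeft ℤ (ZMod 2) (1 : Equiv.Perm (Fin 4))) = C :=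
      Submodule.comap_id C
    refine ⟨1, ?_⟩
    rw [hid]
    rcases eq_bot_or_eq_span_of_forall_const hconst with h | h <;> simp [h]
  · push Not at hconst
    obtain ⟨c, hc, hne⟩ := hconst
    obtain ⟨σ, rfl⟩ :=
      exists_perm_comp_eq_of_dotProduct_self_eq_zero c (hC c hc c hc) (not_forall.2 hne)
    refine ⟨σ, ?_⟩
    rcases (hC.comap_funLeft σ).eq_span_of_mem hc with h | h <;> simp [h]

end Classification

section Parity

lemma four_dvd_sum_of_sq_sum_eq {ι : Type*} {s : Finset ι} {a : ι → ℤ} {m : ℤ}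
    (h : (∑ i ∈ s, a i) ^ 2 = 4 * (∑ i ∈ s, a i ^ 2 - 2 * m)) : 4 ∣ ∑ i ∈ s, a i := by
  obtain ⟨b, hb⟩ : 2 ∣ ∑ i ∈ s, a i :=
    Int.prime_two.dvd_of_dvd_pow (h ▸ Dvd.dvd.mul_right (by norm_num) _)
  have hsq : 2 ∣ ∑ i ∈ s, a i ^ 2 - ∑ i ∈ s, a i := by
    rw [← Finset.sum_sub_distrib]
    refine Finset.dvd_sum fun i _ => ?_
    rw [sq, ← mul_sub_one]
    exact (Int.even_mul_pred_self (a i)).two_dvd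
  have hb2 : b ^ 2 = (∑ i ∈ s, a i ^ 2 - ∑ i ∈ s, a i) + 2 * (b - m) := by
    rw [hb] at h ⊢
    linarith
  have hb_even : 2 ∣ b :=
    Int.prime_two.dvd_of_dvd_pow (hb2 ▸ dvd_add hsq (dvd_mul_right 2 _))
  rw [hb]
  exact mul_dvd_mul_left 2 hb_even

lemma exists_int_eq_of_sum_eq_zero {y : Fin 4 → ℝ} {m : ℤ} (hsum : ∑ i, y i = 0)
    (hsub : ∀ i, ∃ a : ℤ, y i - y 0 = a) (hsq : ∑ i, y i ^ 2 = 2 * m) (i : Fin 4) :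
    ∃ z : ℤ, y i = z := by
  choose a ha using hsub
  have hy (i : Fin 4) : y i = y 0 + a i := by rw [← ha, add_sub_cancel]
  have hy0 : 4 * y 0 = -∑ i, (a i : ℝ) := by
    simp only [← ha, Finset.sum_sub_distrib, hsum]
    simp
  have hsq_sum : (∑ i, a i) ^ 2 = 4 * (∑ i, a i ^ 2 - 2 * m) := by
    have : (∑ i, (a i : ℝ)) ^ 2 = 4 * (∑ i, (a i : ℝ) ^ 2 - 2 * m) := by
      simp only [← ha, sub_sq, Finset.sum_add_distrib, Finset.sum_sub_distrib, hsq,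
        ← Finset.sum_mul, ← Finset.mul_sum, hsum, Finset.sum_const, Finset.card_univ,
        Fintype.card_fin, nsmul_eq_mul]
      ring
    exact_mod_cast this
  obtain ⟨b, hb⟩ := four_dvd_sum_of_sq_sum_eq hsq_sum
  have hb' : ∑ i, (a i : ℝ) = 4 * b := by exact_mod_cast hb
  refine ⟨a i - b, ?_⟩
  push_cast
  linarith [hy i]

end Parity

section LatticesAboveΛ3

lemma codeLattice_bot : codeLattice (⊥ : Submodule ℤ (Fin 4 → ZMod 2)) = Λ3 := by
  refine le_antisymm (fun x hx => ?_) (Submodule.span_le.2 ?_)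
  · obtain ⟨y, hy, hy2, rfl⟩ := mem_codeLattice.1 hx
    choose z hz using modTwo_eq_zero_iff.1 hy2
    obtain rfl : y = (2 : ℤ) • z := funext hz
    refine Submodule.subset_span ⟨z, ?_, divSqrtTwo_two_smul z⟩
    simpa [mem_rootLattice, ← Finset.mul_sum, Fin.sum_univ_four] using hy
  · rintro _ ⟨z, hz, rfl⟩
    refine mem_codeLattice.2 ⟨(2 : ℤ) • z, Submodule.smul_mem _ _ ?_,
      modTwo_eq_zero_iff.2 fun i => ⟨z i, rfl⟩, divSqrtTwo_two_smul z⟩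
    rw [mem_rootLattice, Fin.sum_univ_four, hz]

lemma LatticeIsIntegral.exists_int_sqrt_two_mul_sub {L : Submodule ℤ (E 4)}
    (hL : LatticeIsIntegral L) (hΛ : Λ3 ≤ L) {x : E 4} (hx : x ∈ L) (i j : Fin 4) :
    ∃ a : ℤ, √2 * x i - √2 * x j = a := by
  let z : Fin 4 → ℤ := Pi.single i 1 - Pi.single j 1
  have hz : √2 • intVec z ∈ Λ3 :=
    Submodule.subset_span ⟨z, by rw [← Fin.sum_univ_four]; simp [z], rfl⟩
  obtain ⟨a, ha⟩ := hL x hx _ (hΛ hz)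
  refine ⟨a, ha ▸ ?_⟩
  simp [PiLp.inner_apply, intVec, z, Pi.single_apply, mul_sub, sub_mul]

lemma LatticeIsIntegral.le_codeLattice_top {L : Submodule ℤ (E 4)} (hL : LatticeIsIntegral L)
    (hΛ : Λ3 ≤ L) (hV : ∀ x ∈ L, x 0 + x 1 + x 2 + x 3 = 0) : L ≤ codeLattice ⊤ := by
  intro x hx
  have hsum : ∑ i, √2 * x i = 0 := by
    rw [← Finset.mul_sum, Fin.sum_univ_four, hV x hx, mul_zero]
  obtain ⟨m, hm⟩ := hL x hx x hx
  have hsq : ∑ i, (√2 * x i) ^ 2 = 2 * m := by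
    simp [← hm, EuclideanSpace.real_norm_sq_eq, mul_pow, ← Finset.mul_sum]
  choose y hy using exists_int_eq_of_sum_eq_zero hsum
    (fun i => hL.exists_int_sqrt_two_mul_sub hΛ hx i 0) hsq
  refine mem_codeLattice.2 ⟨y, mem_rootLattice.2 ?_, Submodule.mem_top, ?_⟩
  · simp only [hy] at hsum
    exact_mod_cast hsum
  · ext i
    rw [divSqrtTwo_apply, ← hy, inv_mul_cancel_left₀ (by positivity)]

lemma divSqrtTwo_eq_u12 : divSqrtTwo 4 ![1, -1, 0, 0] = u12 := by
  ext i
  fin_cases i <;> simp [u12, εv, divSqrtTwo_apply]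

lemma divSqrtTwo_eq_u34 : divSqrtTwo 4 ![0, 0, 1, -1] = u34 := by
  ext i
  fin_cases i <;> simp [u34, εv, divSqrtTwo_apply]

lemma divSqrtTwo_eq_w : divSqrtTwo 4 ![1, -1, 1, -1] = w := by
  ext i
  fin_cases i <;> simp [w, εv, divSqrtTwo_apply]

lemma codeLattice_span_u12 :
    codeLattice (Submodule.span ℤ {![1, 1, 0, 0]}) = Λ3 ⊔ Submodule.span ℤ {u12} := by
  have hmod : modTwo 4 ![1, -1, 0, 0] = ![1, 1, 0, 0] := by decide
  have hroot : ({![1, -1, 0, 0]} : Set (Fin 4 → ℤ)) ⊆ rootLattice 4 := by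
    simp [mem_rootLattice, Fin.sum_univ_four]
  simpa only [Set.image_singleton, hmod, divSqrtTwo_eq_u12, codeLattice_bot]
    using codeLattice_span_modTwo hroot

lemma codeLattice_span_w :
    codeLattice (Submodule.span ℤ {![1, 1, 1, 1]}) = Λ3 ⊔ Submodule.span ℤ {w} := by
  have hmod : modTwo 4 ![1, -1, 1, -1] = ![1, 1, 1, 1] := by decide
  have hroot : ({![1, -1, 1, -1]} : Set (Fin 4 → ℤ)) ⊆ rootLattice 4 := by
    simp [mem_rootLattice, Fin.sum_univ_four]
  simpa only [Set.image_singleton, hmod, divSqrtTwo_eq_w, codeLattice_bot]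
    using codeLattice_span_modTwo hroot

lemma codeLattice_span_u12_u34 :
    codeLattice (Submodule.span ℤ {![1, 1, 0, 0], ![0, 0, 1, 1]}) =
      Λ3 ⊔ Submodule.span ℤ {u12, u34} := by
  have hmod : modTwo 4 ![1, -1, 0, 0] = ![1, 1, 0, 0] := by decide
  have hmod' : modTwo 4 ![0, 0, 1, -1] = ![0, 0, 1, 1] := by decide
  have hroot : ({![1, -1, 0, 0], ![0, 0, 1, -1]} : Set (Fin 4 → ℤ)) ⊆ rootLattice 4 := by
    simp [Set.insert_subset_iff, mem_rootLattice, Fin.sum_univ_four]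
  simpa only [Set.image_pair, hmod, hmod', divSqrtTwo_eq_u12, divSqrtTwo_eq_u34, codeLattice_bot]
    using codeLattice_span_modTwo hroot

end LatticesAboveΛ3

/-- Every integral lattice `L` with `Λ₃ ⊆ L ⊆ V = {x : x 0 + x 1 + x 2 + x 3 = 0}` is
isometric to one of the four lattices `Λ₃`, `Λ₃ + ℤ·(ε1-ε2)/√2`,
`Λ₃ + ℤ·(ε1-ε2+ε3-ε4)/√2`, `Λ₃ + ℤ·(ε1-ε2)/√2 + ℤ·(ε3-ε4)/√2`. -/
theorem integral_lattices_containing_Λ3 (L : Submodule ℤ (E 4))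
    (hL : LatticeIsIntegral L) (hΛ : Λ3 ≤ L) (hV : ∀ x ∈ L, x 0 + x 1 + x 2 + x 3 = 0) :
    IsometricLattices L Λ3 ∨
    IsometricLattices L (Λ3 ⊔ Submodule.span ℤ {u12}) ∨
    IsometricLattices L (Λ3 ⊔ Submodule.span ℤ {w}) ∨
    IsometricLattices L (Λ3 ⊔ Submodule.span ℤ {u12, u34}) := by
  let C := (L.comap (divSqrtTwo 4)).map (modTwo 4)
  have hLC : codeLattice C = L :=
    codeLattice_map_modTwo_comap_divSqrtTwo (codeLattice_bot ▸ hΛ) (hL.le_codeLattice_top hΛ hV)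
  obtain ⟨σ, hσ⟩ := hL.isSelfOrthogonal.exists_perm_comap_mem
  have hiso := isometricLattices_codeLattice_comap_funLeft C σ
  rw [hLC] at hiso
  rcases hσ with h | h | h | h
  · rw [h, codeLattice_bot] at hiso
    exact .inl hiso
  · rw [h, codeLattice_span_u12] at hiso
    exact .inr (.inl hiso)
  · rw [h, codeLattice_span_w] at hiso
    exact .inr (.inr (.inl hiso))
  · rw [h, codeLattice_span_u12_u34] at hiso
    exact .inr (.inr (.inr hiso))
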